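/- Let X and Y be metric spaces satisfying assumptions (A), let Ω ⊊ X be a bounded domain that is locally connected at the boundary, let D ⊊ Y be a bounded domain, and let f ∈ F(Ω, D). If {E_k} is a chain in Ω, then {f(E_k)} is a chain in D. -/

import Mathlib

open Set Metric Filter Bornology
open scoped ENNReal Topology

noncomputable section

/-- A metric space is doubling if there is `N` such that every ball of radius `r`
can be covered by at most `N` balls of radius `r/2`. -/
def DoublingSpace (X : Type*) [MetricSpace X] : Prop :=
  ∃ N : ℕ, ∀ (x : X) (r : ℝ), ∃ t : Finset X,
    t.card ≤ N ∧ Metric.ball x r ⊆ ⋃ y ∈ t, Metric.ball y (r / 2)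

/-- A metric space is quasiconvex if there is `C ≥ 1` such that any two points are
joined by a rectifiable curve of length at most `C · d(x,y)`. -/
def QuasiconvexSpace (X : Type*) [MetricSpace X] : Prop :=
  ∃ C : ℝ, 1 ≤ C ∧ ∀ x y : X, ∃ γ : ℝ → X,
    ContinuousOn γ (Set.Icc 0 1) ∧ γ 0 = x ∧ γ 1 = y ∧
    eVariationOn γ (Set.Icc 0 1) ≤ ENNReal.ofReal (C * dist x y)

/-- Assumptions (A): complete, doubling and quasiconvex. -/
def AssumptionsA (X : Type*) [MetricSpace X] : Prop :=
  CompleteSpace X ∧ DoublingSpace X ∧ QuasiconvexSpace X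

/-- A domain: a nonempty open connected subset. -/
def IsDomainIn {X : Type*} [MetricSpace X] (Ω : Set X) : Prop :=
  IsOpen Ω ∧ IsConnected Ω

/-- The inner diameter distance `dist_{M'}` between `E, F ⊆ Ω`: the infimum of diameters of
rectifiable curves in `Ω` joining `E` and `F` (the infimum of the empty set being `∞`). -/
def innerDiamDist {X : Type*} [MetricSpace X] (Ω E F : Set X) : ℝ≥0∞ :=
  ⨅ (γ : ℝ → X) (_ : ContinuousOn γ (Set.Icc 0 1) ∧ γ '' Set.Icc 0 1 ⊆ Ω ∧
      eVariationOn γ (Set.Icc 0 1) < ⊤ ∧ γ 0 ∈ E ∧ γ 1 ∈ F),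
    EMetric.diam (γ '' Set.Icc 0 1)

/-- The Mazurkiewicz distance `dist_M` between `A, B ⊆ Ω`: the infimum of diameters of
connected subsets of `Ω` meeting both `A` and `B`. -/
def mazDist {X : Type*} [MetricSpace X] (Ω A B : Set X) : ℝ≥0∞ :=
  ⨅ (K : Set X) (_ : K ⊆ Ω ∧ IsConnected K ∧ (K ∩ A).Nonempty ∧ (K ∩ B).Nonempty),
    EMetric.diam K

/-- An acceptable set in a bounded domain `Ω`: a bounded connected proper subset of `Ω`
whose closure meets `∂Ω`. -/
def AcceptableIn {X : Type*} [MetricSpace X] (Ω E : Set X) : Prop :=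
  Bornology.IsBounded E ∧ IsConnected E ∧ E ⊆ Ω ∧ E ≠ Ω ∧
    (closure E ∩ frontier Ω).Nonempty

/-- A chain in `Ω`. -/
def IsChainIn {X : Type*} [MetricSpace X] (Ω : Set X) (E : ℕ → Set X) : Prop :=
  (∀ k, AcceptableIn Ω (E k)) ∧
  (∀ k, E (k + 1) ⊆ E k) ∧
  (∀ k, 0 < mazDist Ω (Ω ∩ frontier (E (k + 1))) (Ω ∩ frontier (E k))) ∧
  (⋂ k, closure (E k)) ⊆ frontier Ω

/-- The impression of a chain. -/
def impression {X : Type*} [MetricSpace X] (E : ℕ → Set X) : Set X :=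
  ⋂ k, closure (E k)

/-- A chain `E` divides a chain `F` if every member of `F` contains some member of `E`. -/
def ChainDivides {X : Type*} (E F : ℕ → Set X) : Prop :=
  ∀ k, ∃ l, E l ⊆ F k

/-- Two chains are equivalent if they divide each other. -/
def ChainEquiv {X : Type*} (E F : ℕ → Set X) : Prop :=
  ChainDivides E F ∧ ChainDivides F E

/-- A chain represents a prime end if every chain dividing it is equivalent to it. -/
def IsPrimeChain {X : Type*} [MetricSpace X] (Ω : Set X) (E : ℕ → Set X) : Prop :=
  IsChainIn Ω E ∧ ∀ F : ℕ → Set X, IsChainIn Ω F → ChainDivides F E → ChainDivides E F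

/-- A chain represents a singleton prime end if moreover its impression is a single point. -/
def IsSingletonPrimeChain {X : Type*} [MetricSpace X] (Ω : Set X) (E : ℕ → Set X) : Prop :=
  IsPrimeChain Ω E ∧ ∃ x : X, impression E = {x}

/-- The bounded turning condition (linear connectedness): any two distinct points of `Ω` lie in a
continuum contained in `Ω` of diameter at most `L` times their distance. -/
def BoundedTurning {X : Type*} [MetricSpace X] (Ω : Set X) : Prop :=
  ∃ L : ℝ, 1 ≤ L ∧ ∀ x ∈ Ω, ∀ y ∈ Ω, x ≠ y → ∃ K : Set X,
    K ⊆ Ω ∧ IsCompact K ∧ IsConnected K ∧ K.Nontrivial ∧ x ∈ K ∧ y ∈ K ∧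
    Metric.diam K ≤ L * dist x y

/-- `Ω` is finitely connected at a boundary point `x`. -/
def FinitelyConnectedAt {X : Type*} [MetricSpace X] (Ω : Set X) (x : X) : Prop :=
  ∀ r : ℝ, 0 < r → ∃ U : Set X, IsOpen U ∧ Bornology.IsBounded U ∧ x ∈ U ∧
    U ⊆ Metric.ball x r ∧
    {C : Set X | ∃ y ∈ U ∩ Ω, C = connectedComponentIn (U ∩ Ω) y}.Finite

/-- `Ω` is finitely connected at the boundary. -/
def FinitelyConnectedAtBoundary {X : Type*} [MetricSpace X] (Ω : Set X) : Prop :=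
  ∀ x ∈ frontier Ω, FinitelyConnectedAt Ω x

/-- `Ω` is locally connected at a boundary point `x`. -/
def LocallyConnectedAt {X : Type*} [MetricSpace X] (Ω : Set X) (x : X) : Prop :=
  ∀ r : ℝ, 0 < r → ∃ U : Set X, IsOpen U ∧ Bornology.IsBounded U ∧ x ∈ U ∧
    U ⊆ Metric.ball x r ∧ IsConnected (U ∩ Ω)

/-- `Ω` is locally connected at the boundary. -/
def LocallyConnectedAtBoundary {X : Type*} [MetricSpace X] (Ω : Set X) : Prop :=
  ∀ x ∈ frontier Ω, LocallyConnectedAt Ω x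

/-- `f` is a homeomorphism of `Ω` onto `Ω'` with inverse `g`. -/
def IsHomeoBetween {X Y : Type*} [MetricSpace X] [MetricSpace Y] (f : X → Y) (g : Y → X)
    (Ω : Set X) (Ω' : Set Y) : Prop :=
  ContinuousOn f Ω ∧ ContinuousOn g Ω' ∧ Set.MapsTo f Ω Ω' ∧ Set.MapsTo g Ω' Ω ∧
  (∀ x ∈ Ω, g (f x) = x) ∧ (∀ y ∈ Ω', f (g y) = y)

/-- The class `F(Ω, Ω')`: homeomorphisms such that for all connected `E, F ⊊ Ω`,
`dist_{M'}(E,F) = 0` iff `dist_{M'}(f(E), f(F)) = 0`. -/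
def ClassF {X Y : Type*} [MetricSpace X] [MetricSpace Y] (Ω : Set X) (Ω' : Set Y)
    (f : X → Y) (g : Y → X) : Prop :=
  IsHomeoBetween f g Ω Ω' ∧
  ∀ E F : Set X, E ⊆ Ω → E ≠ Ω → IsConnected E → F ⊆ Ω → F ≠ Ω → IsConnected F →
    (innerDiamDist Ω E F = 0 ↔ innerDiamDist Ω' (f '' E) (f '' F) = 0)

/-- The cluster set `C(f, x)` of `f : Ω → Y` at `x`. -/
def clusterSetOn {X Y : Type*} [MetricSpace X] [MetricSpace Y] (f : X → Y) (Ω : Set X)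
    (x : X) : Set Y :=
  ⋂ U ∈ 𝓝 x, closure (f '' (U ∩ Ω))


/-!
By boundary connectedness and compactness, `Ω` has Property S: for every `ε` it is a finite union
of connected sets of diameter at most `ε`. Suppose `dist_M(f(A), f(B)) = 0` in `D`. By pigeonhole
two pieces `C`, `C'` of such a cover satisfy `dist_M(f(A ∩ C), f(B ∩ C')) = 0`. On open subsets of
a quasiconvex space a connected set can be replaced by a rectifiable curve in a thin neighbourhood
of it, so that `dist_M = dist_{M'}` there, and `f ∈ F(Ω, D)` gives `dist_M(C, C') = 0`. As `C` and
`C'` meet `A` and `B` and have diameter at most `ε`, it follows that `dist_M(A, B) ≤ 2ε`. Thus `f⁻¹`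
preserves vanishing of the Mazurkiewicz distance, which gives the separation condition for the
image chain; the remaining conditions say that a homeomorphism `Ω → D` sends limit points of `E_k`
inside `Ω` to those of `f(E_k)` inside `D`, and that `closure D` is compact.
-/

section RectifiableCurves

variable {X : Type*} [PseudoEMetricSpace X]

/-- `γ` restricts to a rectifiable curve in `W` on the parameter set `I`: it is continuous and of
finite length there, and maps `I` into `W`. Values outside `I` are irrelevant. -/
def IsRectifiableCurveIn (W : Set X) (γ : ℝ → X) (I : Set ℝ) : Prop :=
  ContinuousOn γ I ∧ MapsTo γ I W ∧ BoundedVariationOn γ I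

namespace IsRectifiableCurveIn

variable {W : Set X} {γ δ : ℝ → X} {I J : Set ℝ} {φ : ℝ → ℝ}

lemma congr (h : IsRectifiableCurveIn W γ I) (hγδ : EqOn δ γ I) : IsRectifiableCurveIn W δ I :=
  ⟨h.1.congr hγδ, h.2.1.congr hγδ.symm, by
    rw [BoundedVariationOn, eVariationOn.congr hγδ]; exact h.2.2⟩

lemma comp_monotoneOn (h : IsRectifiableCurveIn W γ J) (hφ : MonotoneOn φ I)
    (hφc : ContinuousOn φ I) (hIJ : MapsTo φ I J) : IsRectifiableCurveIn W (γ ∘ φ) I :=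
  ⟨h.1.comp hφc hIJ, h.2.1.comp hIJ,
    ne_top_of_le_ne_top h.2.2 (eVariationOn.comp_le_of_monotoneOn γ φ hφ hIJ)⟩

lemma comp_antitoneOn (h : IsRectifiableCurveIn W γ J) (hφ : AntitoneOn φ I)
    (hφc : ContinuousOn φ I) (hIJ : MapsTo φ I J) : IsRectifiableCurveIn W (γ ∘ φ) I :=
  ⟨h.1.comp hφc hIJ, h.2.1.comp hIJ,
    ne_top_of_le_ne_top h.2.2 (eVariationOn.comp_le_of_antitoneOn γ φ hφ hIJ)⟩

lemma union_Icc {a b c : ℝ} (hab : a ≤ b) (hbc : b ≤ c)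
    (h₁ : IsRectifiableCurveIn W γ (Icc a b)) (h₂ : IsRectifiableCurveIn W γ (Icc b c)) :
    IsRectifiableCurveIn W γ (Icc a c) := by
  rw [← Icc_union_Icc_eq_Icc hab hbc]
  refine ⟨h₁.1.union_of_isClosed h₂.1 isClosed_Icc isClosed_Icc, h₁.2.1.union h₂.2.1, ?_⟩
  rw [BoundedVariationOn, eVariationOn.union γ (isGreatest_Icc hab) (isLeast_Icc hbc)]
  exact ENNReal.add_ne_top.2 ⟨h₁.2.2, h₂.2.2⟩

end IsRectifiableCurveIn

/-- The points `x` and `y` are joined by a rectifiable curve in `W`; as in `innerDiamDist`, curves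
are parametrised by `[0, 1]`. -/
def RectifiablyJoinedIn (W : Set X) (x y : X) : Prop :=
  ∃ γ : ℝ → X, IsRectifiableCurveIn W γ (Icc 0 1) ∧ γ 0 = x ∧ γ 1 = y

namespace RectifiablyJoinedIn

variable {W : Set X} {x y z : X}

lemma symm (h : RectifiablyJoinedIn W x y) : RectifiablyJoinedIn W y x := by
  obtain ⟨γ, hγ, rfl, rfl⟩ := h
  refine ⟨γ ∘ (1 - ·), hγ.comp_antitoneOn (fun _ _ _ _ hst => sub_le_sub_left hst 1) (by fun_prop)
    fun t ht => ?_, by simp, by simp⟩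
  exact ⟨sub_nonneg.2 ht.2, sub_le_self 1 ht.1⟩

lemma trans (hxy : RectifiablyJoinedIn W x y) (hyz : RectifiablyJoinedIn W y z) :
    RectifiablyJoinedIn W x z := by
  obtain ⟨γ, hγ, rfl, rfl⟩ := hxy
  obtain ⟨δ, hδ, hδ₀, rfl⟩ := hyz
  let η : ℝ → X := fun t => if t ≤ 1 / 2 then γ (2 * t) else δ (2 * t - 1)
  have hηγ : EqOn η (γ ∘ (2 * ·)) (Icc 0 (1 / 2)) := fun t ht => if_pos ht.2
  have hηδ : EqOn η (δ ∘ (2 * · - 1)) (Icc (1 / 2) 1) := by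
    intro t ht
    rcases ht.1.eq_or_lt with rfl | hlt
    · simp [η, hδ₀]
    · exact if_neg hlt.not_ge
  have hη₁ : IsRectifiableCurveIn W η (Icc 0 (1 / 2)) :=
    (hγ.comp_monotoneOn (fun _ _ _ _ hst => by linarith) (by fun_prop)
      fun t ht => ⟨by linarith [ht.1], by linarith [ht.2]⟩).congr hηγ
  have hη₂ : IsRectifiableCurveIn W η (Icc (1 / 2) 1) :=
    (hδ.comp_monotoneOn (fun _ _ _ _ hst => by linarith) (by fun_prop)
      fun t ht => ⟨by linarith [ht.1], by linarith [ht.2]⟩).congr hηδ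
  refine ⟨η, hη₁.union_Icc (by norm_num) (by norm_num) hη₂, by simp [η], ?_⟩
  rw [hηδ (by norm_num), Function.comp_apply]
  norm_num

end RectifiablyJoinedIn

/-- Every point can be joined to all sufficiently close points by rectifiable curves that stay in a
prescribed neighbourhood: a local form of quasiconvexity, used to replace connected sets by
curves. -/
def LocallyRectifiablyConnected (X : Type*) [PseudoEMetricSpace X] : Prop :=
  ∀ x : X, ∀ U ∈ 𝓝 x, ∀ᶠ y in 𝓝 x, RectifiablyJoinedIn U x y

namespace LocallyRectifiablyConnected

lemma rectifiablyJoinedIn (hX : LocallyRectifiablyConnected X) {K W : Set X}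
    (hK : IsPreconnected K) (hKW : K ⊆ W) (hW : IsOpen W) {x y : X} (hx : x ∈ K) (hy : y ∈ K) :
    RectifiablyJoinedIn W x y :=
  hK.induction₂ (RectifiablyJoinedIn W)
    (fun z hz => mem_nhdsWithin_of_mem_nhds (hX z W (hW.mem_nhds (hKW hz))))
    (fun _ _ _ _ _ _ => .trans) (fun _ _ _ _ => .symm) hx hy

lemma locallyConnectedSpace (hX : LocallyRectifiablyConnected X) : LocallyConnectedSpace X := by
  refine locallyConnectedSpace_iff_connected_subsets.2 fun x U hU =>
    ⟨connectedComponentIn U x, ?_, isPreconnected_connectedComponentIn,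
      connectedComponentIn_subset U x⟩
  filter_upwards [hX x U hU] with y hxy
  obtain ⟨γ, ⟨hγc, hγU, -⟩, hγ₀, hγ₁⟩ := hxy
  have h₀ : x ∈ γ '' Icc 0 1 := ⟨0, by simp, hγ₀⟩
  have h₁ : y ∈ γ '' Icc 0 1 := ⟨1, by simp, hγ₁⟩
  exact (isPreconnected_Icc.image γ hγc).subset_connectedComponentIn h₀ hγU.image_subset h₁

end LocallyRectifiablyConnected

end RectifiableCurves

section AssumptionsA

variable {X : Type*} [MetricSpace X]

lemma QuasiconvexSpace.locallyRectifiablyConnected (hX : QuasiconvexSpace X) :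
    LocallyRectifiablyConnected X := by
  obtain ⟨C, hC, hjoin⟩ := hX
  intro x U hU
  obtain ⟨ε, hε, hεU⟩ := Metric.mem_nhds_iff.1 hU
  have hC₀ : 0 < C := by linarith
  filter_upwards [Metric.ball_mem_nhds x (div_pos hε hC₀)] with y hy
  obtain ⟨γ, hγc, hγ₀, hγ₁, hγv⟩ := hjoin x y
  have hlen : C * dist x y < ε := by rwa [mem_ball', lt_div_iff₀' hC₀] at hy
  refine ⟨γ, ⟨hγc, fun t ht => hεU ?_, ne_top_of_le_ne_top ENNReal.ofReal_ne_top hγv⟩, hγ₀, hγ₁⟩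
  have hdist : edist (γ t) (γ 0) ≤ ENNReal.ofReal (C * dist x y) :=
    (eVariationOn.edist_le γ ht (by simp)).trans hγv
  rw [hγ₀, edist_dist, ENNReal.ofReal_le_ofReal_iff (by positivity)] at hdist
  exact hdist.trans_lt hlen

namespace DoublingSpace

lemma exists_finite_ball_subset_iUnion_ball_div_two_pow (hX : DoublingSpace X) (n : ℕ) (x : X)
    (r : ℝ) : ∃ t : Set X, t.Finite ∧ ball x r ⊆ ⋃ y ∈ t, ball y (r / 2 ^ n) := by
  obtain ⟨N, hN⟩ := hX
  induction n generalizing x r with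
  | zero => exact ⟨{x}, finite_singleton x, by simp⟩
  | succ n ih =>
    obtain ⟨t, -, ht⟩ := hN x r
    choose u hu hcover using fun y => ih y (r / 2)
    refine ⟨⋃ y ∈ t, u y, t.finite_toSet.biUnion fun y _ => hu y, ?_⟩
    simp only [biUnion_iUnion, pow_succ', ← div_div]
    exact ht.trans (iUnion₂_mono fun y _ => hcover y)

lemma totallyBounded (hX : DoublingSpace X) {s : Set X} (hs : IsBounded s) :
    TotallyBounded s := by
  rcases s.eq_empty_or_nonempty with rfl | ⟨x, -⟩
  · exact totallyBounded_empty
  obtain ⟨r, hr⟩ := hs.subset_ball x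
  refine Metric.totallyBounded_iff.2 fun ε hε => ?_
  have hlim : Tendsto (fun n : ℕ => r / 2 ^ n) atTop (𝓝 0) :=
    tendsto_const_nhds.div_atTop (tendsto_pow_atTop_atTop_of_one_lt one_lt_two)
  obtain ⟨n, hn⟩ := (hlim.eventually_lt_const hε).exists
  obtain ⟨t, ht, hcover⟩ := hX.exists_finite_ball_subset_iUnion_ball_div_two_pow n x r
  exact ⟨t, ht, (hr.trans hcover).trans (iUnion₂_mono fun y _ => ball_subset_ball hn.le)⟩

end DoublingSpace

lemma AssumptionsA.isCompact_closure (hX : AssumptionsA X) {s : Set X} (hs : IsBounded s) :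
    IsCompact (closure s) :=
  have := hX.1
  (hX.2.1.totallyBounded hs).closure.isCompact_of_isClosed isClosed_closure

end AssumptionsA

section Distances

variable {X : Type*} [MetricSpace X] {Ω A B C C' : Set X}

lemma mazDist_le_ediam {K : Set X} (hK : K ⊆ Ω) (hKc : IsConnected K) (hA : (K ∩ A).Nonempty)
    (hB : (K ∩ B).Nonempty) : mazDist Ω A B ≤ ediam K :=
  iInf₂_le K ⟨hK, hKc, hA, hB⟩

lemma mazDist_lt_iff {r : ℝ≥0∞} : mazDist Ω A B < r ↔ ∃ K ⊆ Ω, IsConnected K ∧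
    (K ∩ A).Nonempty ∧ (K ∩ B).Nonempty ∧ ediam K < r := by
  simp only [mazDist, iInf_lt_iff, exists_prop, and_assoc]
  rfl

lemma mazDist_anti {A' B' : Set X} (hA : A' ⊆ A) (hB : B' ⊆ B) :
    mazDist Ω A B ≤ mazDist Ω A' B' :=
  le_iInf₂ fun _ hK => mazDist_le_ediam hK.1 hK.2.1
    (hK.2.2.1.mono (inter_subset_inter_right _ hA)) (hK.2.2.2.mono (inter_subset_inter_right _ hB))

lemma mazDist_eq_zero_of_mem {x : X} (hx : x ∈ Ω) (hA : x ∈ A) (hB : x ∈ B) :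
    mazDist Ω A B = 0 :=
  nonpos_iff_eq_zero.1 <| ediam_singleton (x := x) ▸ mazDist_le_ediam (singleton_subset_iff.2 hx)
    isConnected_singleton ⟨x, rfl, hA⟩ ⟨x, rfl, hB⟩

lemma nonempty_of_mazDist_eq_zero (h : mazDist Ω A B = 0) : A.Nonempty ∧ B.Nonempty := by
  obtain ⟨K, -, -, hA, hB, -⟩ := mazDist_lt_iff.1 (h.trans_lt ENNReal.zero_lt_top)
  exact ⟨hA.right, hB.right⟩

lemma mazDist_iUnion {ι κ : Type*} (A : ι → Set X) (B : κ → Set X) :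
    mazDist Ω (⋃ i, A i) (⋃ j, B j) = ⨅ p : ι × κ, mazDist Ω (A p.1) (B p.2) := by
  refine le_antisymm (le_iInf fun p => mazDist_anti (subset_iUnion A _) (subset_iUnion B _)) ?_
  refine le_iInf₂ fun K hK => ?_
  obtain ⟨hKΩ, hKc, hA, hB⟩ := hK
  simp only [inter_iUnion, nonempty_iUnion] at hA hB
  obtain ⟨i, hi⟩ := hA
  obtain ⟨j, hj⟩ := hB
  exact iInf_le_of_le (i, j) (mazDist_le_ediam hKΩ hKc hi hj)

lemma exists_mazDist_eq_zero_of_iUnion {ι κ : Type*} [Finite ι] [Finite κ] {A : ι → Set X}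
    {B : κ → Set X} (h : mazDist Ω (⋃ i, A i) (⋃ j, B j) = 0) :
    ∃ i j, mazDist Ω (A i) (B j) = 0 := by
  obtain ⟨hA, hB⟩ := nonempty_of_mazDist_eq_zero h
  have : Nonempty ι := (nonempty_iUnion.1 hA).nonempty
  have : Nonempty κ := (nonempty_iUnion.1 hB).nonempty
  obtain ⟨p, hp⟩ := exists_eq_ciInf_of_finite (f := fun p : ι × κ => mazDist Ω (A p.1) (B p.2))
  exact ⟨p.1, p.2, hp.trans ((mazDist_iUnion A B).symm.trans h)⟩

lemma mazDist_le_ediam_add_mazDist_add_ediam (hC : C ⊆ Ω) (hC' : C' ⊆ Ω) (hCc : IsConnected C)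
    (hCc' : IsConnected C') (hA : (C ∩ A).Nonempty) (hB : (C' ∩ B).Nonempty) :
    mazDist Ω A B ≤ ediam C + mazDist Ω C C' + ediam C' := by
  simp only [mazDist.eq_def Ω C C', ENNReal.add_iInf, ENNReal.iInf_add]
  refine le_iInf₂ fun K hK => ?_
  obtain ⟨hKΩ, hKc, hKC, hKC'⟩ := hK
  rw [inter_comm] at hKC
  have hCK : IsConnected (C ∪ K) := hCc.union hKC hKc
  have hmeet : ((C ∪ K) ∩ C').Nonempty := hKC'.mono (inter_subset_inter_left _ subset_union_right)
  calc mazDist Ω A B ≤ ediam (C ∪ K ∪ C') :=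
        mazDist_le_ediam (union_subset (union_subset hC hKΩ) hC') (hCK.union hmeet hCc')
          (hA.mono (inter_subset_inter_left _ (subset_union_left.trans subset_union_left)))
          (hB.mono (inter_subset_inter_left _ subset_union_right))
    _ ≤ ediam (C ∪ K) + ediam C' := ediam_union_le hmeet
    _ ≤ ediam C + ediam K + ediam C' := by gcongr; exact ediam_union_le hKC

lemma mazDist_le_innerDiamDist : mazDist Ω A B ≤ innerDiamDist Ω A B :=
  le_iInf₂ fun γ hγ => mazDist_le_ediam hγ.2.1 ((isConnected_Icc zero_le_one).image γ hγ.1)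
    ⟨γ 0, ⟨0, by simp, rfl⟩, hγ.2.2.2.1⟩ ⟨γ 1, ⟨1, by simp, rfl⟩, hγ.2.2.2.2⟩

lemma innerDiamDist_le_mazDist (hX : LocallyRectifiablyConnected X) (hΩ : IsOpen Ω) :
    innerDiamDist Ω A B ≤ mazDist Ω A B := by
  refine le_iInf₂ fun K hK => ENNReal.le_of_forall_pos_le_add fun ε hε _ => ?_
  obtain ⟨hKΩ, hKc, ⟨a, haK, haA⟩, ⟨b, hbK, hbB⟩⟩ := hK
  have hε₂ : (0 : ℝ) < (ε / 2 : NNReal) := by positivity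
  obtain ⟨γ, ⟨hγc, hγW, hγv⟩, rfl, rfl⟩ := hX.rectifiablyJoinedIn hKc.isPreconnected
    (subset_inter hKΩ (self_subset_thickening hε₂ K)) (hΩ.inter isOpen_thickening) haK hbK
  have himage := hγW.image_subset
  calc innerDiamDist Ω A B ≤ ediam (γ '' Icc 0 1) :=
        iInf₂_le γ ⟨hγc, himage.trans inter_subset_left, hγv.lt_top, haA, hbB⟩
    _ ≤ ediam (thickening (ε / 2 : NNReal) K) := ediam_mono (himage.trans inter_subset_right)
    _ ≤ ediam K + 2 * (ε / 2 : NNReal) := ediam_thickening_le _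
    _ = ediam K + ε := by norm_cast; rw [mul_div_cancel₀ ε two_ne_zero]

end Distances

section PropertyS

variable {X : Type*} [MetricSpace X] {Ω : Set X} {x : X}

/-- Sierpiński's Property S: `Ω` is, for every `ε`, covered by finitely many connected subsets of
diameter at most `ε`. -/
def HasPropertyS (Ω : Set X) : Prop :=
  ∀ ε : NNReal, 0 < ε → ∃ 𝒞 : Set (Set X), 𝒞.Finite ∧ Ω ⊆ ⋃₀ 𝒞 ∧
    ∀ C ∈ 𝒞, C ⊆ Ω ∧ IsConnected C ∧ ediam C ≤ ε

lemma LocallyConnectedAt.finitelyConnectedAt (h : LocallyConnectedAt Ω x) :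
    FinitelyConnectedAt Ω x := by
  intro r hr
  obtain ⟨U, hUo, hUb, hxU, hUr, hUc⟩ := h r hr
  refine ⟨U, hUo, hUb, hxU, hUr, (finite_singleton (U ∩ Ω)).subset ?_⟩
  rintro _ ⟨y, hy, rfl⟩
  exact hUc.isPreconnected.connectedComponentIn hy

lemma LocallyConnectedAtBoundary.finitelyConnectedAtBoundary (h : LocallyConnectedAtBoundary Ω) :
    FinitelyConnectedAtBoundary Ω :=
  fun x hx => (h x hx).finitelyConnectedAt

lemma locallyConnectedAt_of_mem [LocallyConnectedSpace X] (hΩ : IsOpen Ω) (hx : x ∈ Ω) :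
    LocallyConnectedAt Ω x := by
  intro r hr
  have hxr : x ∈ Ω ∩ ball x r := ⟨hx, mem_ball_self hr⟩
  have hsub := connectedComponentIn_subset (Ω ∩ ball x r) x
  refine ⟨connectedComponentIn (Ω ∩ ball x r) x, (hΩ.inter isOpen_ball).connectedComponentIn,
    isBounded_ball.subset (hsub.trans inter_subset_right), mem_connectedComponentIn hxr,
    hsub.trans inter_subset_right, ?_⟩
  rw [inter_eq_left.2 (hsub.trans inter_subset_left)]
  exact isConnected_connectedComponentIn_iff.2 hxr

lemma hasPropertyS_of_isCompact_closure (hΩ : IsCompact (closure Ω))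
    (hconn : ∀ x ∈ closure Ω, FinitelyConnectedAt Ω x) : HasPropertyS Ω := by
  intro ε hε
  suffices ∃ 𝒞 : Set (Set X), 𝒞.Finite ∧ closure Ω ∩ Ω ⊆ ⋃₀ 𝒞 ∧
      ∀ C ∈ 𝒞, C ⊆ Ω ∧ IsConnected C ∧ ediam C ≤ ε by
    rwa [inter_eq_right.2 subset_closure] at this
  refine hΩ.induction_on (p := fun s => ∃ 𝒞 : Set (Set X), 𝒞.Finite ∧ s ∩ Ω ⊆ ⋃₀ 𝒞 ∧
    ∀ C ∈ 𝒞, C ⊆ Ω ∧ IsConnected C ∧ ediam C ≤ ε) ⟨∅, by simp⟩ ?_ ?_ fun x hx => ?_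
  · rintro s t hst ⟨𝒞, hfin, hcover, h𝒞⟩
    exact ⟨𝒞, hfin, (inter_subset_inter_left Ω hst).trans hcover, h𝒞⟩
  · rintro s t ⟨𝒞, hfin, hcover, h𝒞⟩ ⟨𝒟, hfin', hcover', h𝒟⟩
    refine ⟨𝒞 ∪ 𝒟, hfin.union hfin', ?_, fun C hC => hC.elim (h𝒞 C) (h𝒟 C)⟩
    rw [union_inter_distrib_right, sUnion_union]
    exact union_subset_union hcover hcover'
  · obtain ⟨U, hUo, -, hxU, hUε, hfin⟩ := hconn x hx (ε / 2 : NNReal) (by positivity)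
    refine ⟨U, mem_nhdsWithin_of_mem_nhds (hUo.mem_nhds hxU), _, hfin,
      fun y hy => ⟨_, ⟨y, hy, rfl⟩, mem_connectedComponentIn hy⟩, ?_⟩
    rintro _ ⟨y, hy, rfl⟩
    have hsub := connectedComponentIn_subset (U ∩ Ω) y
    refine ⟨hsub.trans inter_subset_right, isConnected_connectedComponentIn_iff.2 hy, ?_⟩
    calc ediam (connectedComponentIn (U ∩ Ω) y) ≤ ediam (eball x (ε / 2 : NNReal)) := by
          rw [eball_coe]; exact ediam_mono ((hsub.trans inter_subset_left).trans hUε)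
      _ ≤ 2 * (ε / 2 : NNReal) := ediam_eball_le
      _ = ε := by norm_cast; rw [mul_div_cancel₀ ε two_ne_zero]

lemma FinitelyConnectedAtBoundary.hasPropertyS [LocallyConnectedSpace X]
    (hfc : FinitelyConnectedAtBoundary Ω) (hΩ : IsOpen Ω) (hc : IsCompact (closure Ω)) :
    HasPropertyS Ω := by
  refine hasPropertyS_of_isCompact_closure hc fun x hx => ?_
  by_cases hxΩ : x ∈ Ω
  · exact (locallyConnectedAt_of_mem hΩ hxΩ).finitelyConnectedAt
  · exact hfc x (hΩ.frontier_eq ▸ ⟨hx, hxΩ⟩)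

lemma AssumptionsA.hasPropertyS (hX : AssumptionsA X) (hΩ : IsOpen Ω) (hb : IsBounded Ω)
    (hfc : FinitelyConnectedAtBoundary Ω) : HasPropertyS Ω :=
  have := hX.2.2.locallyRectifiablyConnected.locallyConnectedSpace
  hfc.hasPropertyS hΩ (hX.isCompact_closure hb)

lemma HasPropertyS.mazDist_eq_zero_of_image {Y : Type*} [MetricSpace Y] {D : Set Y} {f : X → Y}
    (hΩ : HasPropertyS Ω)
    (hconn : ∀ C C', C ⊆ Ω → C' ⊆ Ω → IsConnected C → IsConnected C' →
      mazDist D (f '' C) (f '' C') = 0 → mazDist Ω C C' = 0)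
    {A B : Set X} (hA : A ⊆ Ω) (hB : B ⊆ Ω) (hAB : mazDist D (f '' A) (f '' B) = 0) :
    mazDist Ω A B = 0 := by
  refine nonpos_iff_eq_zero.1 (ENNReal.le_of_forall_pos_le_add fun ε hε _ => ?_)
  obtain ⟨𝒞, hfin, hcover, h𝒞⟩ := hΩ (ε / 2) (by positivity)
  have := hfin.to_subtype
  have hsplit : ∀ S ⊆ Ω, f '' S = ⋃ C : 𝒞, f '' (S ∩ C) := fun S hS => by
    rw [← image_iUnion, ← inter_iUnion, ← sUnion_eq_iUnion, inter_eq_left.2 (hS.trans hcover)]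
  rw [hsplit A hA, hsplit B hB] at hAB
  obtain ⟨⟨C, hC⟩, ⟨C', hC'⟩, hAC⟩ := exists_mazDist_eq_zero_of_iUnion hAB
  obtain ⟨hmeetA, hmeetB⟩ := nonempty_of_mazDist_eq_zero hAC
  obtain ⟨hCΩ, hCc, hCε⟩ := h𝒞 C hC
  obtain ⟨hCΩ', hCc', hCε'⟩ := h𝒞 C' hC'
  have hCC' : mazDist Ω C C' = 0 := by
    refine hconn C C' hCΩ hCΩ' hCc hCc' (nonpos_iff_eq_zero.1 (le_of_le_of_eq ?_ hAC))
    exact mazDist_anti (image_mono inter_subset_right) (image_mono inter_subset_right)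
  rw [image_nonempty, inter_comm] at hmeetA hmeetB
  calc mazDist Ω A B ≤ ediam C + mazDist Ω C C' + ediam C' :=
        mazDist_le_ediam_add_mazDist_add_ediam hCΩ hCΩ' hCc hCc' hmeetA hmeetB
    _ ≤ (ε / 2 : NNReal) + 0 + (ε / 2 : NNReal) := by gcongr; exact hCC'.le
    _ = 0 + ε := by rw [add_zero, zero_add]; norm_cast; exact add_halves ε

end PropertyS

section Homeomorphisms

variable {X Y : Type*} [MetricSpace X] [MetricSpace Y] {Ω E : Set X} {D : Set Y} {f : X → Y}
  {g : Y → X}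

namespace IsHomeoBetween

/-- A homeomorphism between open sets as a bundled partial homeomorphism, which gives access to the
transport of closures and frontiers along `OpenPartialHomeomorph.IsImage`. -/
def toOpenPartialHomeomorph (h : IsHomeoBetween f g Ω D) (hΩ : IsOpen Ω) (hD : IsOpen D) :
    OpenPartialHomeomorph X Y where
  toFun := f
  invFun := g
  source := Ω
  target := D
  map_source' _ hx := h.2.2.1 hx
  map_target' _ hy := h.2.2.2.1 hy
  left_inv' := h.2.2.2.2.1
  right_inv' := h.2.2.2.2.2
  continuousOn_toFun := h.1
  continuousOn_invFun := h.2.1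
  open_source := hΩ
  open_target := hD

lemma injOn (h : IsHomeoBetween f g Ω D) : InjOn f Ω :=
  LeftInvOn.injOn h.2.2.2.2.1

lemma image_eq (h : IsHomeoBetween f g Ω D) : f '' Ω = D :=
  h.2.2.1.image_subset.antisymm fun y hy => ⟨g y, h.2.2.2.1 hy, h.2.2.2.2.2 y hy⟩

lemma isImage (h : IsHomeoBetween f g Ω D) (hΩ : IsOpen Ω) (hD : IsOpen D) (hE : E ⊆ Ω) :
    (h.toOpenPartialHomeomorph hΩ hD).IsImage E (f '' E) :=
  fun _ hx => h.injOn.mem_image_iff hE hx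

lemma inter_frontier_image (h : IsHomeoBetween f g Ω D) (hΩ : IsOpen Ω) (hD : IsOpen D)
    (hE : E ⊆ Ω) : D ∩ frontier (f '' E) = f '' (Ω ∩ frontier E) :=
  (h.isImage hΩ hD hE).frontier.image_eq.symm

lemma closure_image_inter_frontier_nonempty (h : IsHomeoBetween f g Ω D) (hΩ : IsOpen Ω)
    (hDc : IsCompact (closure D)) (hE : E ⊆ Ω) (hEf : (closure E ∩ frontier Ω).Nonempty) :
    (closure (f '' E) ∩ frontier D).Nonempty := by
  obtain ⟨-, hg, hfΩ, hgD, hgf, -⟩ := h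
  by_contra hempty
  have hcl : closure (f '' E) ⊆ closure D := closure_mono (hfΩ.mono_left hE).image_subset
  have hclD : closure (f '' E) ⊆ D := fun y hy => by
    by_contra hyD
    exact hempty ⟨y, hy, hcl hy, fun hyi => hyD (interior_subset hyi)⟩
  have hcompact : IsCompact (g '' closure (f '' E)) :=
    (hDc.of_isClosed_subset isClosed_closure hcl).image_of_continuousOn (hg.mono hclD)
  have hEg : closure E ⊆ g '' closure (f '' E) :=
    closure_minimal (fun x hx => ⟨f x, subset_closure ⟨x, hx, rfl⟩, hgf x (hE hx)⟩)
      hcompact.isClosed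
  obtain ⟨x, hxE, hxΩ⟩ := hEf
  exact disjoint_left.1 (disjoint_frontier_iff_isOpen.2 hΩ) hxΩ
    ((hgD.mono_left hclD).image_subset (hEg hxE))

lemma acceptableIn_image (h : IsHomeoBetween f g Ω D) (hΩ : IsOpen Ω) (hDc : IsCompact (closure D))
    (hE : AcceptableIn Ω E) : AcceptableIn D (f '' E) := by
  obtain ⟨-, hEc, hEΩ, hEne, hEf⟩ := hE
  have hsub : f '' E ⊆ D := (h.2.2.1.mono_left hEΩ).image_subset
  refine ⟨hDc.isBounded.subset (hsub.trans subset_closure), hEc.image f (h.1.mono hEΩ), hsub, ?_,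
    h.closure_image_inter_frontier_nonempty hΩ hDc hEΩ hEf⟩
  rwa [← h.image_eq, Ne, h.injOn.image_eq_image_iff hEΩ Subset.rfl]

lemma iInter_closure_image_subset_frontier (h : IsHomeoBetween f g Ω D) (hΩ : IsOpen Ω)
    (hD : IsOpen D) {ι : Type*} [Nonempty ι] {E : ι → Set X} (hE : ∀ k, E k ⊆ Ω)
    (himp : ⋂ k, closure (E k) ⊆ frontier Ω) : ⋂ k, closure (f '' E k) ⊆ frontier D := by
  intro y hy
  rw [mem_iInter] at hy
  inhabit ι
  rw [hD.frontier_eq]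
  refine ⟨closure_mono (h.2.2.1.mono_left (hE default)).image_subset (hy default), fun hyD => ?_⟩
  obtain ⟨x, hx, rfl⟩ := h.image_eq.ge hyD
  refine disjoint_left.1 (disjoint_frontier_iff_isOpen.2 hΩ) (himp (mem_iInter.2 fun k => ?_)) hx
  exact ((h.isImage hΩ hD (hE k)).closure hx).1 (hy k)

end IsHomeoBetween

end Homeomorphisms

lemma mazDist_eq_zero_of_innerDiamDist_image_imp {X Y : Type*} [MetricSpace X] [MetricSpace Y]
    {Ω C C' : Set X} {D : Set Y} {f : X → Y} (hY : LocallyRectifiablyConnected Y) (hD : IsOpen D)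
    (hdist : C ⊂ Ω → C' ⊂ Ω → innerDiamDist D (f '' C) (f '' C') = 0 → innerDiamDist Ω C C' = 0)
    (hC : C ⊆ Ω) (hC' : C' ⊆ Ω) (h : mazDist D (f '' C) (f '' C') = 0) : mazDist Ω C C' = 0 := by
  obtain ⟨⟨x, hx⟩, ⟨x', hx'⟩⟩ := (nonempty_of_mazDist_eq_zero h).imp Nonempty.of_image
    Nonempty.of_image
  rcases hC.eq_or_ssubset with rfl | hCΩ
  · exact mazDist_eq_zero_of_mem (hC' hx') (hC' hx') hx'
  rcases hC'.eq_or_ssubset with rfl | hCΩ'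
  · exact mazDist_eq_zero_of_mem (hC hx) hx (hC hx)
  have hzero : innerDiamDist D (f '' C) (f '' C') = 0 :=
    nonpos_iff_eq_zero.1 (h ▸ innerDiamDist_le_mazDist hY hD)
  exact nonpos_iff_eq_zero.1 (hdist hCΩ hCΩ' hzero ▸ mazDist_le_innerDiamDist)

theorem statement_1_general {X Y : Type*} [MetricSpace X] [MetricSpace Y]
    (hY : LocallyRectifiablyConnected Y)
    {Ω : Set X} (hΩo : IsOpen Ω) (hΩS : HasPropertyS Ω)
    {D : Set Y} (hDo : IsOpen D) (hDc : IsCompact (closure D))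
    {f : X → Y} {g : Y → X} (hfg : IsHomeoBetween f g Ω D)
    (hdist : ∀ C C', C ⊂ Ω → C' ⊂ Ω → IsConnected C → IsConnected C' →
      innerDiamDist D (f '' C) (f '' C') = 0 → innerDiamDist Ω C C' = 0)
    {E : ℕ → Set X} (hE : IsChainIn Ω E) :
    IsChainIn D (fun k => f '' E k) := by
  obtain ⟨hacc, hanti, hsep, himp⟩ := hE
  have hEΩ : ∀ k, E k ⊆ Ω := fun k => (hacc k).2.2.1
  refine ⟨fun k => hfg.acceptableIn_image hΩo hDc (hacc k), fun k => image_mono (hanti k),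
    fun k => ?_, hfg.iInter_closure_image_subset_frontier hΩo hDo hEΩ himp⟩
  rw [hfg.inter_frontier_image hΩo hDo (hEΩ _), hfg.inter_frontier_image hΩo hDo (hEΩ _)]
  refine pos_iff_ne_zero.2 fun hzero => (hsep k).ne' ?_
  refine hΩS.mazDist_eq_zero_of_image (fun C₁ C₂ hC₁ hC₂ hc₁ hc₂ => ?_) inter_subset_left
    inter_subset_left hzero
  exact mazDist_eq_zero_of_innerDiamDist_image_imp hY hDo
    (fun hs₁ hs₂ => hdist C₁ C₂ hs₁ hs₂ hc₁ hc₂) hC₁ hC₂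

/-- a map in the class `F(Ω, D)` sends chains of `Ω` to chains of `D`. -/
theorem statement_1 {X Y : Type*} [MetricSpace X] [MetricSpace Y]
    (hX : AssumptionsA X) (hY : AssumptionsA Y)
    (Ω : Set X) (hΩdom : IsDomainIn Ω) (hΩbdd : Bornology.IsBounded Ω)
    (hΩne : Ω ≠ Set.univ) (hΩlc : LocallyConnectedAtBoundary Ω)
    (D : Set Y) (hDdom : IsDomainIn D) (hDbdd : Bornology.IsBounded D)
    (hDne : D ≠ Set.univ)
    (f : X → Y) (g : Y → X) (hf : ClassF Ω D f g)
    (E : ℕ → Set X) (hE : IsChainIn Ω E) :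
    IsChainIn D (fun k => f '' E k) := by
  have hΩS : HasPropertyS Ω :=
    hX.hasPropertyS hΩdom.1 hΩbdd hΩlc.finitelyConnectedAtBoundary
  exact statement_1_general hY.2.2.locallyRectifiablyConnected hΩdom.1 hΩS hDdom.1
    (hY.isCompact_closure hDbdd) hf.1 (fun C C' hC hC' hCc hCc' =>
      (hf.2 C C' hC.subset hC.ne hCc hC'.subset hC'.ne hCc').2) hE

end
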